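/- Dynamic policy flexes O(√T) times (Theorem 3): Consider the no-flex process (ω ≡ 0, so every ball is placed in its preferred bin) with gap Gap^{nf}(t) = max_i x_i^{nf}(t) − t/N, and for a constant a > 0 let T_a = min{t ∈ {1,…,T} : Gap^{nf}(t) ≥ a·(T−t)·q/N} (so T_a ≤ T always, since Gap^{nf}(T) ≥ 0). Then there exists a constant C, depending only on a, N and q, such that E[T − T_a] ≤ C·√T for every horizon T. Consequently, the dynamic policy π^d — which at step t sets ω(t) = 1 iff the current gap is at least a_d·(T−t)·q/N with a_d = 1/(5·binom(N,2)) — satisfies E[M^d] ≤ C'·√T for a constant C' depending only on N and q. -/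

import Mathlib

/-!
Both quantities are controlled by the running maximum of the no-flex gap. Write
`D_i(t) = x_i(t) - t/N` for the centred no-flex loads and `S_i(t) = max_{s ≤ t} D_i(s)`, so that
the no-flex gap at every time `t ≤ T` is at most `∑_i S_i(T)`.

* Pathwise, the trigger inequality at time `T_a` gives `T - T_a ≤ (N / (a q)) ∑_i S_i(T)`.
  The dynamic policy coincides with the no-flex process until it first flexes, so its trigger
  inequality at that moment gives `M^d ≤ √T + (N / (a_d q)) ∑_i S_i(T)`.
* Each `D_i` is a martingale with increments of variance at most `1`, and Doob's `L²` inequality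
  gives `E[S_i(T)²] ≤ 4 T`, hence `E[S_i(T)] ≤ 3 √T`. The `L²` inequality is obtained from the
  potential `G = S² - 2 S D + 2 D²`: it satisfies `S² ≤ 2 G`, and its expectation grows by at most
  `2` per step, because `S'² - 2 S' D' ≤ S² - 2 S D'` whenever `S' = max S D'`
  (`potential_step`, `expec_potential_le`).
-/

attribute [local instance] Classical.propDecidable

/-- An arrival type: (is-flex-ball, preferred bin, flex set). -/
abbrev Arrival (N : ℕ) := Bool × Fin N × Finset (Fin N)

/-- Mass of a single arrival: `f ~ Bernoulli(q)`, `p` uniform on `Fin N`,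
`F` uniform on the 2-element subsets of `Fin N`, mutually independent. -/
noncomputable def arrivalProb (N : ℕ) (q : ℝ) (a : Arrival N) : ℝ :=
  (if a.1 then q else 1 - q) * (1 / (N : ℝ)) *
    (if a.2.2.card = 2 then 1 / (N.choose 2 : ℝ) else 0)

/-- Mass of a sequence of `T` i.i.d. arrivals. -/
noncomputable def seqMass (N T : ℕ) (q : ℝ) (xs : Fin T → Arrival N) : ℝ :=
  ∏ t, arrivalProb N q (xs t)

/-- Expectation of a real random variable on the canonical space of `T` arrivals. -/
noncomputable def expec (N T : ℕ) (q : ℝ) (X : (Fin T → Arrival N) → ℝ) : ℝ :=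
  ∑ xs : Fin T → Arrival N, seqMass N T q xs * X xs

/-- Probability of an event on the canonical space of `T` arrivals. -/
noncomputable def prob (N T : ℕ) (q : ℝ) (A : (Fin T → Arrival N) → Prop) : ℝ :=
  ∑ xs : Fin T → Arrival N, if A xs then seqMass N T q xs else 0

/-- The least-loaded bin in `F` (ties broken in favor of the smallest index). -/
noncomputable def argminBin {N : ℕ} [NeZero N] (x : Fin N → ℕ) (F : Finset (Fin N)) : Fin N :=
  if hF : (F.filter fun i => ∀ j ∈ F, x i ≤ x j).Nonempty
  then (F.filter fun i => ∀ j ∈ F, x i ≤ x j).min' hF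
  else 0

/-- One step of the greedy (least-loaded) allocation: if the ball is a flex ball and
flexing is exerted, it goes to the least-loaded bin of its flex set (lexicographic
tie-breaking); otherwise it goes to its preferred bin. -/
noncomputable def greedyStep {N : ℕ} [NeZero N] (flex : Bool) (a : Arrival N)
    (x : Fin N → ℕ) : Fin N → ℕ :=
  fun i => if i = (if a.1 && flex then argminBin x a.2.2 else a.2.1) then x i + 1 else x i

/-- Load process under a flexing rule `dec` (which may depend on the whole realization,
the time, and the current loads), with greedy placement of flexed flex balls. -/
noncomputable def greedyLoads {N T : ℕ} [NeZero N]
    (dec : (Fin T → Arrival N) → ℕ → (Fin N → ℕ) → Bool)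
    (xs : Fin T → Arrival N) : ℕ → Fin N → ℕ
  | 0 => fun _ => 0
  | t + 1 =>
    if h : t < T then
      greedyStep (dec xs t (greedyLoads dec xs t)) (xs ⟨t, h⟩) (greedyLoads dec xs t)
    else greedyLoads dec xs t

/-- The maximum load over all bins. -/
noncomputable def maxLoad {N : ℕ} (x : Fin N → ℕ) : ℕ := Finset.univ.sup x

/-- `Gap(t)` : maximum load minus the average load `t/N`. -/
noncomputable def gap {N : ℕ} (x : Fin N → ℕ) (t : ℕ) : ℝ :=
  (maxLoad x : ℝ) - (t : ℝ) / (N : ℝ)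

/-- Number of flexed balls `M = ∑_t f_t ω(t)`. -/
noncomputable def numFlexed {N T : ℕ} [NeZero N]
    (dec : (Fin T → Arrival N) → ℕ → (Fin N → ℕ) → Bool) (xs : Fin T → Arrival N) : ℕ :=
  ∑ t : Fin T, if (xs t).1 && dec xs (t : ℕ) (greedyLoads dec xs (t : ℕ)) then 1 else 0

/-- Flexing rule of a "static"-type policy: flex exactly from period
`T - c·√(T log T)` on (ball `t` corresponds to step index `t-1`). -/
noncomputable def lateDec (N T : ℕ) (c : ℝ) :
    (Fin T → Arrival N) → ℕ → (Fin N → ℕ) → Bool :=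
  fun _ s _ =>
    if (T : ℝ) - c * Real.sqrt ((T : ℝ) * Real.log (T : ℝ)) ≤ ((s : ℝ) + 1) then true else false

/-- Flexing rule of the dynamic policy: flex at period `t = s+1` iff the current gap
`Gap(t-1)` is at least `a_d (T - t) q / N` with `a_d = 1/(5 C(N,2))`. -/
noncomputable def dynDec (N T : ℕ) (q : ℝ) :
    (Fin T → Arrival N) → ℕ → (Fin N → ℕ) → Bool :=
  fun _ s x =>
    if (1 / (5 * (N.choose 2 : ℝ))) * ((T : ℝ) - ((s : ℝ) + 1)) * q / (N : ℝ) ≤ gap x s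
    then true else false

/-- First time (within horizon `T`) at which the maximum load equals `S`. -/
noncomputable def hitTime {N : ℕ} (T S : ℕ) (x : ℕ → Fin N → ℕ) : ℕ :=
  if h : ((Finset.range (T + 1)).filter fun t => maxLoad (x t) = S).Nonempty
  then ((Finset.range (T + 1)).filter fun t => maxLoad (x t) = S).min' h
  else T

/-- The dynamic opaque policy: the flag records whether the trigger condition
`Gap(t) ≥ c_d (T-t) q / N` (with `c_d = 1/(10 C(N,2))`) has held at some time `≤ t`;
from then on every flex ball is flexed (greedy placement). Returns (flag, loads). -/
noncomputable def dynOpaque (N T : ℕ) [NeZero N] (q : ℝ) (xs : Fin T → Arrival N) :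
    ℕ → Bool × (Fin N → ℕ)
  | 0 =>
    (if (1 / (10 * (N.choose 2 : ℝ))) * (T : ℝ) * q / (N : ℝ) ≤ 0 then true else false,
      fun _ => 0)
  | t + 1 =>
    let p := dynOpaque N T q xs t
    let x' := if h : t < T then greedyStep p.1 (xs ⟨t, h⟩) p.2 else p.2
    (p.1 ||
      (if (1 / (10 * (N.choose 2 : ℝ))) * ((T : ℝ) - ((t : ℝ) + 1)) * q / (N : ℝ) ≤
          gap x' (t + 1)
       then true else false),
     x')

/-- Number of flexed balls `D = ∑_{t=1}^{R} f_t ω(t)` during one replenishment cycle,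
for a policy given by the flexing rule `dec`. -/
noncomputable def cycleFlexCount (N T : ℕ) [NeZero N]
    (dec : (Fin T → Arrival N) → ℕ → (Fin N → ℕ) → Bool) (S : ℕ)
    (xs : Fin T → Arrival N) : ℕ :=
  ∑ t ∈ Finset.range (hitTime T S (greedyLoads dec xs)),
    if h : t < T then (if (xs ⟨t, h⟩).1 && dec xs t (greedyLoads dec xs t) then 1 else 0)
    else 0

/-- Number of flexed balls during one replenishment cycle of the dynamic opaque policy. -/
noncomputable def dynFlexCount (N T : ℕ) [NeZero N] (q : ℝ) (S : ℕ)
    (xs : Fin T → Arrival N) : ℕ :=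
  ∑ t ∈ Finset.range (hitTime T S fun u => (dynOpaque N T q xs u).2),
    if h : t < T then (if (xs ⟨t, h⟩).1 && (dynOpaque N T q xs t).1 then 1 else 0) else 0

/-- The no-flex load process. -/
noncomputable def noFlexLoads {N T : ℕ} [NeZero N] (xs : Fin T → Arrival N) :
    ℕ → Fin N → ℕ :=
  greedyLoads (fun _ _ _ => false) xs

/-- `T_a = min {t ∈ {1,…,T} : Gap^{nf}(t) ≥ a (T-t) q / N}` (this set is provably
nonempty since `Gap^{nf}(T) ≥ 0`; the `else` branch is never taken). -/
noncomputable def Ta (N T : ℕ) [NeZero N] (q a : ℝ) (xs : Fin T → Arrival N) : ℕ :=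
  if h : ((Finset.Icc 1 T).filter fun t : ℕ =>
      a * ((T : ℝ) - (t : ℝ)) * q / (N : ℝ) ≤ gap (noFlexLoads xs t) t).Nonempty
  then ((Finset.Icc 1 T).filter fun t : ℕ =>
      a * ((T : ℝ) - (t : ℝ)) * q / (N : ℝ) ≤ gap (noFlexLoads xs t) t).min' h
  else T

/-! ### Expectations on the space of arrival sequences -/

lemma arrivalProb_nonneg {N : ℕ} {q : ℝ} (hq0 : 0 < q) (hq1 : q ≤ 1) (b : Arrival N) :
    0 ≤ arrivalProb N q b := by
  unfold arrivalProb
  have h1 : 0 ≤ (if b.1 then q else 1 - q) := by split_ifs <;> linarith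
  have h2 : 0 ≤ (if b.2.2.card = 2 then 1 / (N.choose 2 : ℝ) else 0) := by
    split_ifs <;> positivity
  positivity

lemma sum_flexSet {N : ℕ} (hN : 2 ≤ N) :
    ∑ F : Finset (Fin N), (if F.card = 2 then 1 / (N.choose 2 : ℝ) else 0) = 1 := by
  have hc : (N.choose 2 : ℝ) ≠ 0 := by
    exact_mod_cast (Nat.choose_pos hN).ne'
  have hcard : (Finset.univ.filter fun F : Finset (Fin N) => F.card = 2).card = N.choose 2 := by
    have h : (Finset.univ.filter fun F : Finset (Fin N) => F.card = 2)
        = Finset.powersetCard 2 Finset.univ := by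
      ext F; simp [Finset.mem_powersetCard]
    rw [h, Finset.card_powersetCard, Finset.card_univ, Fintype.card_fin]
  rw [← Finset.sum_filter, Finset.sum_const, hcard, nsmul_eq_mul]
  field_simp

/-- The preferred bin of a single arrival is uniform on `Fin N`. -/
lemma sum_arrivalProb_pref {N : ℕ} (hN : 2 ≤ N) (q : ℝ) (g : Fin N → ℝ) :
    ∑ b : Arrival N, arrivalProb N q b * g b.2.1 = (1 / (N : ℝ)) * ∑ i, g i := by
  simp only [Fintype.sum_prod_type, arrivalProb]
  have h : ∀ (c : Bool) (i : Fin N),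
      ∑ F : Finset (Fin N), (if c then q else 1 - q) * (1 / (N : ℝ)) *
        (if F.card = 2 then 1 / (N.choose 2 : ℝ) else 0) * g i
      = (if c then q else 1 - q) * ((1 / (N : ℝ)) * g i) := by
    intro c i
    rw [← Finset.sum_mul, ← Finset.mul_sum, sum_flexSet hN]
    ring
  simp only [h, Fintype.sum_bool, ← Finset.mul_sum]
  simp
  ring

lemma sum_arrivalProb_affine {N : ℕ} [NeZero N] (hN : 2 ≤ N) (q : ℝ) (i : Fin N) (α β : ℝ) :
    ∑ b : Arrival N, arrivalProb N q b * (α + β * (if i = b.2.1 then 1 else 0))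
      = α + β / N := by
  have hN0 : (N : ℝ) ≠ 0 := by exact_mod_cast NeZero.ne N
  rw [sum_arrivalProb_pref hN q (fun j => α + β * (if i = j then 1 else 0)),
    Finset.sum_add_distrib, ← Finset.mul_sum, Finset.sum_ite_eq]
  simp
  field_simp

lemma sum_arrivalProb {N : ℕ} [NeZero N] (hN : 2 ≤ N) (q : ℝ) :
    ∑ b : Arrival N, arrivalProb N q b = 1 := by
  simpa using sum_arrivalProb_affine hN q 0 1 0

/-- Conditioning on all arrivals but the last one. -/
lemma expec_succ (N T : ℕ) (q : ℝ) (X : (Fin (T + 1) → Arrival N) → ℝ) :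
    expec N (T + 1) q X = expec N T q (fun xs =>
      ∑ b : Arrival N, arrivalProb N q b * X (Fin.snoc (α := fun _ => Arrival N) xs b)) := by
  unfold expec
  rw [← (Fin.snocEquiv (fun _ : Fin (T + 1) => Arrival N)).sum_comp, Fintype.sum_prod_type,
    Finset.sum_comm]
  refine Finset.sum_congr rfl fun xs _ => ?_
  rw [Finset.mul_sum]
  refine Finset.sum_congr rfl fun b _ => ?_
  simp only [Fin.snocEquiv, Equiv.coe_fn_mk, seqMass, Fin.prod_univ_castSucc, Fin.snoc_castSucc,
    Fin.snoc_last]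
  ring

lemma expec_mono {N T : ℕ} {q : ℝ} (hq0 : 0 < q) (hq1 : q ≤ 1)
    {X Y : (Fin T → Arrival N) → ℝ} (h : ∀ xs, X xs ≤ Y xs) :
    expec N T q X ≤ expec N T q Y :=
  Finset.sum_le_sum fun xs _ => mul_le_mul_of_nonneg_left (h xs)
    (Finset.prod_nonneg fun t _ => arrivalProb_nonneg hq0 hq1 (xs t))

lemma expec_add (N T : ℕ) (q : ℝ) (X Y : (Fin T → Arrival N) → ℝ) :
    expec N T q (fun xs => X xs + Y xs) = expec N T q X + expec N T q Y := by
  simp only [expec, mul_add, Finset.sum_add_distrib]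

lemma expec_const_mul (N T : ℕ) (q c : ℝ) (X : (Fin T → Arrival N) → ℝ) :
    expec N T q (fun xs => c * X xs) = c * expec N T q X := by
  simp only [expec, Finset.mul_sum]
  exact Finset.sum_congr rfl fun xs _ => by ring

lemma expec_sum (N T : ℕ) (q : ℝ) (X : Fin N → (Fin T → Arrival N) → ℝ) :
    expec N T q (fun xs => ∑ i, X i xs) = ∑ i, expec N T q (X i) := by
  simp only [expec, Finset.mul_sum]
  exact Finset.sum_comm

lemma expec_const {N : ℕ} [NeZero N] (hN : 2 ≤ N) (T : ℕ) (q c : ℝ) :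
    expec N T q (fun _ => c) = c := by
  induction T with
  | zero => simp [expec, seqMass]
  | succ T ih => rw [expec_succ]; simp only [← Finset.sum_mul, sum_arrivalProb hN, one_mul, ih]

/-! ### The centred no-flex loads and their running maxima -/

/-- The centred no-flex load `x_i(t) - t/N` of bin `i`. -/
noncomputable def centred {N T : ℕ} [NeZero N] (i : Fin N) (xs : Fin T → Arrival N) (t : ℕ) : ℝ :=
  (noFlexLoads xs t i : ℝ) - (t : ℝ) / N

/-- The running maximum `max_{s ≤ t} (x_i(s) - s/N)`, which is nonnegative since the value at
time `0` is `0`. -/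
noncomputable def runMax {N T : ℕ} [NeZero N] (i : Fin N) (xs : Fin T → Arrival N) : ℕ → ℝ
  | 0 => 0
  | t + 1 => max (runMax i xs t) (centred i xs (t + 1))

lemma noFlexLoads_snoc {N T : ℕ} [NeZero N] (xs : Fin T → Arrival N) (b : Arrival N) (t : ℕ)
    (ht : t ≤ T) :
    noFlexLoads (Fin.snoc (α := fun _ => Arrival N) xs b : Fin (T + 1) → Arrival N) t
      = noFlexLoads xs t := by
  induction t with
  | zero => rfl
  | succ t ih =>
    have h1 : t < T := ht
    have h2 : t < T + 1 := by omega
    have ih' := ih h1.le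
    unfold noFlexLoads at ih' ⊢
    simp only [greedyLoads, h1, h2, dif_pos, ih']
    congr 1
    exact Fin.snoc_castSucc (α := fun _ => Arrival N) b xs ⟨t, h1⟩

lemma noFlexLoads_snoc_last {N T : ℕ} [NeZero N] (xs : Fin T → Arrival N) (b : Arrival N)
    (i : Fin N) :
    noFlexLoads (Fin.snoc (α := fun _ => Arrival N) xs b : Fin (T + 1) → Arrival N) (T + 1) i
      = noFlexLoads xs T i + if i = b.2.1 then 1 else 0 := by
  have h := noFlexLoads_snoc xs b T le_rfl
  have h3 : (Fin.snoc (α := fun _ => Arrival N) xs b : Fin (T + 1) → Arrival N)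
      ⟨T, Nat.lt_succ_self T⟩ = b := Fin.snoc_last (α := fun _ => Arrival N) b xs
  unfold noFlexLoads at h ⊢
  simp only [greedyLoads, Nat.lt_succ_self T, dif_pos, h, h3, greedyStep]
  simp only [Bool.and_false, Bool.false_eq_true, if_false]
  split_ifs <;> simp

lemma runMax_snoc {N T : ℕ} [NeZero N] (i : Fin N) (xs : Fin T → Arrival N) (b : Arrival N)
    (t : ℕ) (ht : t ≤ T) :
    runMax i (Fin.snoc (α := fun _ => Arrival N) xs b : Fin (T + 1) → Arrival N) t
      = runMax i xs t := by
  induction t with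
  | zero => rfl
  | succ t ih =>
    simp only [runMax, centred, ih (Nat.le_of_succ_le ht), noFlexLoads_snoc xs b (t + 1) ht]

lemma centred_snoc_last {N T : ℕ} [NeZero N] (i : Fin N) (xs : Fin T → Arrival N)
    (b : Arrival N) :
    centred i (Fin.snoc (α := fun _ => Arrival N) xs b : Fin (T + 1) → Arrival N) (T + 1)
      = centred i xs T + ((if i = b.2.1 then 1 else 0) - 1 / (N : ℝ)) := by
  simp only [centred, noFlexLoads_snoc_last]
  push_cast
  ring

lemma runMax_mono {N T : ℕ} [NeZero N] (i : Fin N) (xs : Fin T → Arrival N) :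
    Monotone (runMax i xs) :=
  monotone_nat_of_le_succ fun _ => le_max_left _ _

lemma runMax_nonneg {N T : ℕ} [NeZero N] (i : Fin N) (xs : Fin T → Arrival N) (t : ℕ) :
    0 ≤ runMax i xs t := by
  simpa [runMax] using runMax_mono i xs (Nat.zero_le t)

lemma centred_le_runMax {N T : ℕ} [NeZero N] (i : Fin N) (xs : Fin T → Arrival N) (t : ℕ) :
    centred i xs t ≤ runMax i xs t := by
  cases t with
  | zero => simp [centred, runMax, noFlexLoads, greedyLoads]
  | succ t => exact le_max_right _ _

lemma gap_le_sum_runMax {N T : ℕ} [NeZero N] (xs : Fin T → Arrival N) (t : ℕ) (ht : t ≤ T) :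
    gap (noFlexLoads xs t) t ≤ ∑ i, runMax i xs T := by
  obtain ⟨i, -, hi⟩ := Finset.exists_mem_eq_sup (Finset.univ : Finset (Fin N))
    Finset.univ_nonempty (noFlexLoads xs t)
  calc gap (noFlexLoads xs t) t = centred i xs t := by simp only [gap, maxLoad, hi, centred]
    _ ≤ runMax i xs T := (centred_le_runMax i xs t).trans (runMax_mono i xs ht)
    _ ≤ ∑ i, runMax i xs T :=
      Finset.single_le_sum (fun j _ => runMax_nonneg j xs T) (Finset.mem_univ i)

/-! ### Doob's inequality for the running maxima -/

/-- The potential `S² - 2 S D + 2 D²` at the horizon, for the centred load `D` of bin `i` and its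
running maximum `S`. -/
noncomputable def potential {N T : ℕ} [NeZero N] (i : Fin N) (xs : Fin T → Arrival N) : ℝ :=
  runMax i xs T ^ 2 - 2 * runMax i xs T * centred i xs T + 2 * centred i xs T ^ 2

/-- If the maximum is not updated both sides agree; if it is, the left side becomes `-d²` and the
difference of the two sides is `(S - d)²`. -/
lemma potential_step (S d : ℝ) : max S d ^ 2 - 2 * max S d * d ≤ S ^ 2 - 2 * S * d := by
  rcases le_total S d with h | h
  · rw [max_eq_right h]; nlinarith [sq_nonneg (S - d)]
  · rw [max_eq_left h]

lemma expec_potential_le {N : ℕ} [NeZero N] (hN : 2 ≤ N) {q : ℝ} (hq0 : 0 < q) (hq1 : q ≤ 1)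
    (i : Fin N) (T : ℕ) : expec N T q (fun xs => potential i xs) ≤ 2 * T := by
  induction T with
  | zero =>
    simp [expec, seqMass, potential, runMax, centred, noFlexLoads, greedyLoads]
  | succ T ih =>
    rw [expec_succ]
    have hstep : ∀ xs : Fin T → Arrival N,
        ∑ b : Arrival N, arrivalProb N q b *
          potential i (Fin.snoc (α := fun _ => Arrival N) xs b : Fin (T + 1) → Arrival N)
          ≤ potential i xs + 2 := by
      intro xs
      set S := runMax i xs T with hS
      set D := centred i xs T with hD
      set r : ℝ := 1 / (N : ℝ) with hr
      have hr0 : 0 ≤ r := by positivity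
      have hr1 : r ≤ 1 := by
        rw [hr, div_le_one (by positivity)]
        exact_mod_cast (by omega : 1 ≤ N)
      -- The potential after the step is bounded by an affine function of the indicator that
      -- the ball prefers bin `i`, using that the indicator is idempotent.
      have hpt : ∀ b : Arrival N,
          potential i (Fin.snoc (α := fun _ => Arrival N) xs b : Fin (T + 1) → Arrival N)
            ≤ (S ^ 2 - 2 * S * (D - r) + 2 * (D - r) ^ 2)
              + (-2 * S + 4 * (D - r) + 2) * (if i = b.2.1 then 1 else 0) := by
        intro b
        simp only [potential, runMax, runMax_snoc i xs b T le_rfl, centred_snoc_last, ← hS, ← hD,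
          ← hr]
        set I : ℝ := if i = b.2.1 then 1 else 0 with hI
        have hII : I ^ 2 = I := by rw [hI]; split_ifs <;> norm_num
        have := potential_step S (D + (I - r))
        nlinarith
      calc _ ≤ ∑ b : Arrival N, arrivalProb N q b *
            ((S ^ 2 - 2 * S * (D - r) + 2 * (D - r) ^ 2)
              + (-2 * S + 4 * (D - r) + 2) * (if i = b.2.1 then 1 else 0)) :=
            Finset.sum_le_sum fun b _ =>
              mul_le_mul_of_nonneg_left (hpt b) (arrivalProb_nonneg hq0 hq1 b)
        _ = (S ^ 2 - 2 * S * (D - r) + 2 * (D - r) ^ 2)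
              + (-2 * S + 4 * (D - r) + 2) * r := by
            rw [sum_arrivalProb_affine hN, hr]; ring
        _ ≤ potential i xs + 2 := by
            simp only [potential, ← hS, ← hD]
            nlinarith
    calc _ ≤ expec N T q (fun xs => potential i xs + 2) := expec_mono hq0 hq1 hstep
      _ = expec N T q (fun xs => potential i xs) + 2 := by
          rw [expec_add, expec_const hN]
      _ ≤ 2 * ((T + 1 : ℕ) : ℝ) := by push_cast; linarith

lemma expec_runMax_le {N : ℕ} [NeZero N] (hN : 2 ≤ N) {q : ℝ} (hq0 : 0 < q) (hq1 : q ≤ 1)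
    (i : Fin N) (T : ℕ) : expec N T q (fun xs => runMax i xs T) ≤ 3 * Real.sqrt T := by
  rcases Nat.eq_zero_or_pos T with rfl | hT
  · simp [expec, runMax]
  have hs : 0 < Real.sqrt T := Real.sqrt_pos.mpr (by exact_mod_cast hT)
  have hsq : Real.sqrt T * Real.sqrt T = T := Real.mul_self_sqrt (Nat.cast_nonneg T)
  -- `2 √T S ≤ S² + T` and `S² ≤ 2 G`, the latter being `(S - 2 D)² ≥ 0`.
  have h1 : 2 * Real.sqrt T * expec N T q (fun xs => runMax i xs T)
      ≤ 2 * expec N T q (fun xs => potential i xs) + T := by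
    rw [← expec_const_mul, ← expec_const_mul]
    have hc := expec_const (N := N) hN T q (T : ℝ)
    rw [← hc, ← expec_add, hc]
    refine expec_mono hq0 hq1 fun xs => ?_
    simp only [potential]
    nlinarith [sq_nonneg (runMax i xs T - Real.sqrt T),
      sq_nonneg (runMax i xs T - 2 * centred i xs T)]
  have h2 := expec_potential_le hN hq0 hq1 i T
  have h3 : Real.sqrt T * expec N T q (fun xs => runMax i xs T)
      ≤ Real.sqrt T * (3 * Real.sqrt T) := by nlinarith
  exact le_of_mul_le_mul_left h3 hs

lemma expec_sum_runMax_le {N : ℕ} [NeZero N] (hN : 2 ≤ N) {q : ℝ} (hq0 : 0 < q) (hq1 : q ≤ 1)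
    (T : ℕ) : expec N T q (fun xs => ∑ i, runMax i xs T) ≤ N * (3 * Real.sqrt T) := by
  rw [expec_sum]
  refine (Finset.sum_le_sum fun i _ => expec_runMax_le hN hq0 hq1 i T).trans ?_
  simp

/-! ### Pathwise bounds -/

/-- Solving the trigger inequality for the remaining time `u`. -/
lemma remaining_le {N : ℕ} [NeZero N] {q a u R : ℝ} (hq0 : 0 < q) (ha : 0 < a)
    (h : a * u * q / N ≤ R) : u ≤ N / (a * q) * R := by
  have hN0 : (0 : ℝ) < N := by exact_mod_cast NeZero.pos N
  rw [div_le_iff₀ hN0] at h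
  rw [div_mul_eq_mul_div, le_div_iff₀ (by positivity)]
  linarith

lemma sub_Ta_le {N T : ℕ} [NeZero N] {q a : ℝ} (hq0 : 0 < q) (ha : 0 < a)
    (xs : Fin T → Arrival N) :
    (T : ℝ) - (Ta N T q a xs : ℝ) ≤ N / (a * q) * ∑ i, runMax i xs T := by
  unfold Ta
  split_ifs with h
  · have hm := Finset.min'_mem _ h
    rw [Finset.mem_filter, Finset.mem_Icc] at hm
    exact remaining_le hq0 ha (hm.2.trans (gap_le_sum_runMax xs _ hm.1.2))
  · have : 0 ≤ ∑ i, runMax i xs T := Finset.sum_nonneg fun i _ => runMax_nonneg i xs T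
    rw [sub_self]
    positivity

/-- A policy follows the no-flex process as long as it has not decided to flex. -/
lemma greedyLoads_eq_noFlexLoads {N T : ℕ} [NeZero N]
    (dec : (Fin T → Arrival N) → ℕ → (Fin N → ℕ) → Bool) (xs : Fin T → Arrival N) (s : ℕ)
    (h : ∀ t < s, dec xs t (greedyLoads dec xs t) = false) (t : ℕ) (ht : t ≤ s) :
    greedyLoads dec xs t = noFlexLoads xs t := by
  induction t with
  | zero => rfl
  | succ t ih =>
    have ih' := ih (Nat.le_of_succ_le ht)
    have hd := h t ht
    unfold noFlexLoads at ih' ⊢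
    simp only [greedyLoads, hd]
    rw [ih']

lemma numFlexed_le {N T : ℕ} [NeZero N] (hN : 2 ≤ N) {q : ℝ} (hq0 : 0 < q)
    (xs : Fin T → Arrival N) :
    (numFlexed (dynDec N T q) xs : ℝ) ≤
      Real.sqrt T + N / ((1 / (5 * (N.choose 2 : ℝ))) * q) * ∑ i, runMax i xs T := by
  have ha : 0 < 1 / (5 * (N.choose 2 : ℝ)) := by
    have : (0 : ℝ) < N.choose 2 := by exact_mod_cast Nat.choose_pos hN
    positivity
  set dec := dynDec N T q with hdec
  by_cases hex : ∃ t, t < T ∧ dec xs t (greedyLoads dec xs t) = true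
  · obtain ⟨hsT, hs⟩ := Nat.find_spec hex
    have hmin : ∀ t < Nat.find hex, dec xs t (greedyLoads dec xs t) = false := by
      intro t ht
      have := Nat.find_min hex ht
      simpa [ht.trans hsT] using this
    -- `s` is the first step at which the policy decides to flex.
    set s := Nat.find hex
    have hcount : numFlexed dec xs ≤ T - s := by
      unfold numFlexed
      calc _ ≤ ∑ t : Fin T, (if s ≤ (t : ℕ) then 1 else 0) := by
            refine Finset.sum_le_sum fun t _ => ?_
            by_cases hst : s ≤ (t : ℕ)
            · simp only [hst, if_true]; split_ifs <;> simp
            · simp [hst, hmin t (not_le.mp hst)]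
        _ = ∑ t ∈ Finset.range T, (if s ≤ t then 1 else 0) :=
            Fin.sum_univ_eq_sum_range (fun t => if s ≤ t then 1 else 0) T
        _ = ((Finset.range T).filter fun t => s ≤ t).card := by
            rw [Finset.card_filter]
        _ = (Finset.Ico s T).card := by
            congr 1; ext t; simp [and_comm]
        _ = T - s := Nat.card_Ico s T
    have hgap : (1 / (5 * (N.choose 2 : ℝ))) * ((T : ℝ) - ((s : ℝ) + 1)) * q / (N : ℝ)
        ≤ gap (noFlexLoads xs s) s := by
      rw [greedyLoads_eq_noFlexLoads dec xs s hmin s le_rfl] at hs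
      simpa [hdec, dynDec] using hs
    have hrem := remaining_le hq0 ha (hgap.trans (gap_le_sum_runMax xs s hsT.le))
    have hcount' : (numFlexed dec xs : ℝ) ≤ T - s := by
      rw [← Nat.cast_sub hsT.le]; exact_mod_cast hcount
    have hone : 1 ≤ Real.sqrt T := by
      rw [Real.one_le_sqrt]
      exact_mod_cast (by omega : 1 ≤ T)
    linarith
  · push Not at hex
    have h0 : numFlexed dec xs = 0 := by
      unfold numFlexed
      refine Finset.sum_eq_zero fun t _ => ?_
      simp [hex t t.isLt]
    have : 0 ≤ ∑ i, runMax i xs T := Finset.sum_nonneg fun i _ => runMax_nonneg i xs T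
    rw [h0, Nat.cast_zero]
    positivity

/-- **Theorem 3** (the dynamic policy flexes `O(√T)` times): `E[T - T_a] ≤ C √T` for a
constant `C` depending only on `a`, `N`, `q`; consequently the dynamic policy satisfies
`E[M^d] ≤ C' √T` for a constant `C'` depending only on `N` and `q`. -/
theorem dynamic_flex_count (N : ℕ) [NeZero N] (hN : 2 ≤ N) (q : ℝ)
    (hq0 : 0 < q) (hq1 : q ≤ 1) :
    (∀ a : ℝ, 0 < a → ∃ C : ℝ, ∀ T : ℕ,
        expec N T q (fun xs => (T : ℝ) - (Ta N T q a xs : ℝ)) ≤ C * Real.sqrt T) ∧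
    (∃ C' : ℝ, ∀ T : ℕ,
        expec N T q (fun xs => (numFlexed (dynDec N T q) xs : ℝ)) ≤ C' * Real.sqrt T) := by
  have hN0 : (0 : ℝ) < N := by exact_mod_cast NeZero.pos N
  refine ⟨fun a ha => ⟨N / (a * q) * (N * 3), fun T => ?_⟩,
    1 + N / ((1 / (5 * (N.choose 2 : ℝ))) * q) * (N * 3), fun T => ?_⟩
  · refine (expec_mono hq0 hq1 fun xs => sub_Ta_le hq0 ha xs).trans ?_
    rw [expec_const_mul]
    have := mul_le_mul_of_nonneg_left (expec_sum_runMax_le hN hq0 hq1 T)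
      (by positivity : 0 ≤ N / (a * q))
    linarith
  · refine (expec_mono hq0 hq1 fun xs => numFlexed_le hN hq0 xs).trans ?_
    rw [expec_add, expec_const_mul, expec_const hN]
    have := mul_le_mul_of_nonneg_left (expec_sum_runMax_le hN hq0 hq1 T)
      (by positivity : 0 ≤ N / ((1 / (5 * (N.choose 2 : ℝ))) * q))
    linarith
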